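/- Let f : V → ℝ with ∫_V f dμ < 0 and let p be a nonnegative integer. Then there exists Λ₀ < 0 such that for every λ < Λ₀ the functional J_λ has a local minimum point u_λ (with respect to the sup norm on functions V → ℝ); in particular u_λ solves Δu(x) = λ·e^{u(x)}·(e^{u(x)} − 1)^{2p+1} + f(x) for all x ∈ V, and moreover u_λ(x) < ln(1/2) for all x ∈ V. -/

import Mathlib

/-!
The minimizer is found on the closed convex set `K = {u | u ≤ log (1/2)}`.

*Existence.* On `K` the nonlinear term lies between two constants, because `0 ≤ (e^u − 1)² ≤ 1`
there. Write `u = u(x₀) + (u − u(x₀))` in the linear term. Since `∫ f < 0`, the first part is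
`(-∫ f)·(-u(x₀))`, which tends to `+∞` as `u(x₀) → -∞`; the second part is absorbed in the
Dirichlet energy by the Poincaré inequality (`poincare`), which is where connectedness enters. Hence
the sublevel sets of `J` in `K` are bounded (`sublevel_bounded`), and `J` attains its minimum on
`K` (`exists_min`).

*The constraint is inactive.* Suppose the minimizer `u` touches `log (1/2)` at `x`. Then `x` is a
maximum point of `u`, so `Δu(x) ≤ 0`, while `λ e^u (e^u − 1)^{2p+1} = -λ / 2^{2p+2}` at `x`. For
`-λ` large compared to `|f|`, the partial derivative
`μ(x) (-Δu + λ e^u (e^u − 1)^{2p+1} + f)(x)` of `J` is strictly positive, so lowering `u(x)` stays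
in `K` and lowers `J`: a contradiction. So `u < log (1/2)` everywhere, `u` is an interior point of
`K`, hence a local minimum of `J`, and the vanishing of the partial derivatives is the equation.
-/

open Real

/-- Graph Laplacian: `Δu(x) = (1/μ(x)) Σ_y w x y (u y − u x)`. -/
noncomputable def glap {V : Type*} [Fintype V] (w : V → V → ℝ) (μ : V → ℝ)
    (u : V → ℝ) (x : V) : ℝ :=
  (1 / μ x) * ∑ y, w x y * (u y - u x)

/-- Integral over the graph: `∫_V g dμ = Σ_x μ(x) g(x)`. -/
noncomputable def gint {V : Type*} [Fintype V] (μ : V → ℝ) (g : V → ℝ) : ℝ :=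
  ∑ x, μ x * g x

/-- Gradient norm squared: `|∇u|²(x) = (1/(2μ(x))) Σ_y w x y (u y − u x)²`. -/
noncomputable def gradsq {V : Type*} [Fintype V] (w : V → V → ℝ) (μ : V → ℝ)
    (u : V → ℝ) (x : V) : ℝ :=
  (1 / (2 * μ x)) * ∑ y, w x y * (u y - u x) ^ 2

/-- The functional `J_λ(u) = (1/2)∫|∇u|² + (λ/(2p+2))∫(e^u−1)^{2p+2} + ∫ f u dμ`. -/
noncomputable def Jfun {V : Type*} [Fintype V] (w : V → V → ℝ) (μ : V → ℝ)
    (p : ℕ) (lam : ℝ) (f : V → ℝ) (u : V → ℝ) : ℝ :=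
  (1 / 2) * gint μ (gradsq w μ u)
    + (lam / (2 * p + 2)) * gint μ (fun x => (Real.exp (u x) - 1) ^ (2 * p + 2))
    + gint μ (fun x => f x * u x)

open Filter Topology

section Helpers

variable {V : Type*} [Fintype V]

/-- The Dirichlet sum over ordered pairs, `Σ_{x,y} w x y (u y − u x)²`, which is `2 ∫ |∇u|² dμ`. -/
noncomputable def energy (w : V → V → ℝ) (u : V → ℝ) : ℝ :=
  ∑ x, ∑ y, w x y * (u y - u x) ^ 2

lemma energy_nonneg {w : V → V → ℝ} (hw : ∀ x y, 0 ≤ w x y) (u : V → ℝ) : 0 ≤ energy w u :=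
  Finset.sum_nonneg fun x _ => Finset.sum_nonneg fun y _ => mul_nonneg (hw x y) (sq_nonneg _)

lemma Jfun_eq (w : V → V → ℝ) {μ : V → ℝ} (hμ : ∀ x, 0 < μ x) (p : ℕ) (lam : ℝ) (f u : V → ℝ) :
    Jfun w μ p lam f u = (1 / 4) * energy w u
      + (lam / (2 * p + 2)) * ∑ x, μ x * (Real.exp (u x) - 1) ^ (2 * p + 2)
      + ∑ x, μ x * (f x * u x) := by
  have h : gint μ (gradsq w μ u) = (1 / 2) * energy w u := by
    unfold gint gradsq energy
    rw [Finset.mul_sum]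
    refine Finset.sum_congr rfl fun x _ => ?_
    have := (hμ x).ne'
    field_simp
  unfold Jfun
  rw [h]
  unfold gint
  ring

lemma continuous_Jfun (w : V → V → ℝ) {μ : V → ℝ} (hμ : ∀ x, 0 < μ x) (p : ℕ) (lam : ℝ)
    (f : V → ℝ) : Continuous (Jfun w μ p lam f) := by
  rw [funext (Jfun_eq w hμ p lam f)]
  unfold energy
  fun_prop

/-- Green's formula for the bilinear form of the energy. -/
lemma green {w : V → V → ℝ} (hsymm : ∀ x y, w x y = w y x) (u h : V → ℝ) :
    ∑ x, ∑ y, w x y * ((u y - u x) * (h y - h x))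
      = -2 * ∑ x, h x * ∑ y, w x y * (u y - u x) := by
  have h1 : ∑ x, ∑ y, w x y * (u y - u x) * h y = -∑ x, ∑ y, w x y * (u y - u x) * h x := by
    rw [Finset.sum_comm, ← Finset.sum_neg_distrib]
    refine Finset.sum_congr rfl fun x _ => ?_
    rw [← Finset.sum_neg_distrib]
    refine Finset.sum_congr rfl fun y _ => ?_
    rw [hsymm y x]; ring
  have h2 : ∑ x, h x * ∑ y, w x y * (u y - u x) = ∑ x, ∑ y, w x y * (u y - u x) * h x := by
    refine Finset.sum_congr rfl fun x _ => ?_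
    rw [Finset.mul_sum]
    exact Finset.sum_congr rfl fun y _ => by ring
  rw [h2]
  have h3 : ∑ x, ∑ y, w x y * ((u y - u x) * (h y - h x))
      = ∑ x, ∑ y, w x y * (u y - u x) * h y - ∑ x, ∑ y, w x y * (u y - u x) * h x := by
    simp only [← Finset.sum_sub_distrib]
    exact Finset.sum_congr rfl fun x _ => Finset.sum_congr rfl fun y _ => by ring
  rw [h3, h1]; ring

/-- The first variation of `J` at `u` in the direction `h`. -/
lemma hasDerivAt_Jfun {w : V → V → ℝ} {μ : V → ℝ} (hsymm : ∀ x y, w x y = w y x)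
    (hμ : ∀ x, 0 < μ x) (p : ℕ) (lam : ℝ) (f u h : V → ℝ) :
    HasDerivAt (fun t : ℝ => Jfun w μ p lam f (fun x => u x + t * h x))
      (∑ x, h x * (μ x * (-glap w μ u x
        + lam * Real.exp (u x) * (Real.exp (u x) - 1) ^ (2 * p + 1) + f x))) 0 := by
  have hlin : ∀ x, HasDerivAt (fun t : ℝ => u x + t * h x) (h x) 0 := fun x => by
    simpa using ((hasDerivAt_id (0 : ℝ)).mul_const (h x)).const_add (u x)
  have h1 : HasDerivAt (fun t : ℝ => energy w (fun x => u x + t * h x))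
      (∑ x, ∑ y, w x y * (2 * ((u y - u x) * (h y - h x)))) 0 := by
    unfold energy
    refine HasDerivAt.fun_sum fun x _ => HasDerivAt.fun_sum fun y _ => ?_
    refine ((((hlin y).sub (hlin x)).pow 2).const_mul (w x y)).congr_deriv ?_
    simp
    left; ring
  have h2 : HasDerivAt
      (fun t : ℝ => ∑ x, μ x * (Real.exp (u x + t * h x) - 1) ^ (2 * p + 2))
      (∑ x, μ x * (((2 * p + 2 : ℕ) : ℝ) * (Real.exp (u x) - 1) ^ (2 * p + 1)
        * (Real.exp (u x) * h x))) 0 := by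
    refine HasDerivAt.fun_sum fun x _ => ?_
    refine (((((hlin x).exp).sub_const 1).pow (2 * p + 2)).const_mul (μ x)).congr_deriv ?_
    simp
  have h3 : HasDerivAt (fun t : ℝ => ∑ x, μ x * (f x * (u x + t * h x)))
      (∑ x, μ x * (f x * h x)) 0 :=
    HasDerivAt.fun_sum fun x _ => ((hlin x).const_mul (f x)).const_mul (μ x)
  have h4 := ((h1.const_mul (1 / 4)).add (h2.const_mul (lam / (2 * p + 2)))).add h3
  have h5 : (fun t : ℝ => Jfun w μ p lam f (fun x => u x + t * h x)) = _ :=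
    funext fun t => Jfun_eq w hμ p lam f (fun x => u x + t * h x)
  rw [h5]
  refine h4.congr_deriv ?_
  have hg : ∑ x, ∑ y, w x y * (2 * ((u y - u x) * (h y - h x)))
      = -4 * ∑ x, h x * ∑ y, w x y * (u y - u x) := by
    have := green hsymm u h
    calc _ = 2 * ∑ x, ∑ y, w x y * ((u y - u x) * (h y - h x)) := by
          simp only [Finset.mul_sum]
          exact Finset.sum_congr rfl fun x _ => Finset.sum_congr rfl fun y _ => by ring
      _ = _ := by rw [this]; ring
  rw [hg]
  have hp : (2 * (p : ℝ) + 2) ≠ 0 := by positivity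
  rw [← mul_assoc, Finset.mul_sum, Finset.mul_sum, ← Finset.sum_add_distrib,
    ← Finset.sum_add_distrib]
  refine Finset.sum_congr rfl fun x _ => ?_
  have := (hμ x).ne'
  unfold glap
  push_cast
  field_simp

/-- The partial derivative of `J` at `u` in the coordinate `x`. -/
lemma hasDerivAt_Jfun_single [DecidableEq V] {w : V → V → ℝ} {μ : V → ℝ}
    (hsymm : ∀ x y, w x y = w y x) (hμ : ∀ x, 0 < μ x) (p : ℕ) (lam : ℝ) (f u : V → ℝ) (x : V) :
    HasDerivAt (fun t : ℝ => Jfun w μ p lam f (fun y => u y + t * (Pi.single x 1 : V → ℝ) y))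
      (μ x * (-glap w μ u x
        + lam * Real.exp (u x) * (Real.exp (u x) - 1) ^ (2 * p + 1) + f x)) 0 := by
  have := hasDerivAt_Jfun hsymm hμ p lam f u (Pi.single x 1 : V → ℝ)
  simpa [Pi.single_apply] using this

/-- Difference bound between two vertices by the energy, by concatenating edges of a walk. -/
lemma pair_bound {w : V → V → ℝ} (hsymm : ∀ x y, w x y = w y x) (hw : ∀ x y, 0 ≤ w x y)
    {x y : V} (W : (SimpleGraph.fromRel (fun x y => 0 < w x y)).Walk x y) :
    ∃ C : ℝ, 0 ≤ C ∧ ∀ u : V → ℝ, (u y - u x) ^ 2 ≤ C * energy w u := by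
  induction W with
  | nil => exact ⟨0, le_rfl, fun u => by simp⟩
  | @cons a b c hab _ ih =>
    obtain ⟨C, hC, ih⟩ := ih
    have hpos : 0 < w a b := by
      rcases ((SimpleGraph.fromRel_adj _ _ _).1 hab).2 with h | h
      · exact h
      · rw [hsymm]; exact h
    refine ⟨2 * (1 / w a b) + 2 * C, by positivity, fun u => ?_⟩
    have hedge : w a b * (u b - u a) ^ 2 ≤ energy w u := by
      have hn : ∀ x y, 0 ≤ w x y * (u y - u x) ^ 2 := fun x y => mul_nonneg (hw x y) (sq_nonneg _)
      calc w a b * (u b - u a) ^ 2 ≤ ∑ y, w a y * (u y - u a) ^ 2 :=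
            Finset.single_le_sum (f := fun y => w a y * (u y - u a) ^ 2)
              (fun y _ => hn a y) (Finset.mem_univ b)
        _ ≤ energy w u :=
            Finset.single_le_sum (f := fun x => ∑ y, w x y * (u y - u x) ^ 2)
              (fun x _ => Finset.sum_nonneg fun y _ => hn x y) (Finset.mem_univ a)
    have hedge' : (u b - u a) ^ 2 ≤ (1 / w a b) * energy w u := by
      rw [one_div, inv_mul_eq_div, le_div_iff₀ hpos]; linarith
    have := ih u
    nlinarith [sq_nonneg ((u c - u b) - (u b - u a))]

/-- Poincaré inequality, with a base point instead of the mean value. -/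
lemma poincare {w : V → V → ℝ} (hsymm : ∀ x y, w x y = w y x) (hw : ∀ x y, 0 ≤ w x y)
    (hconn : (SimpleGraph.fromRel (fun x y => 0 < w x y)).Connected) (x₀ : V) :
    ∃ C : ℝ, 0 < C ∧ ∀ u : V → ℝ, ∑ x, (u x - u x₀) ^ 2 ≤ C * energy w u := by
  have h : ∀ x, ∃ C : ℝ, 0 ≤ C ∧ ∀ u : V → ℝ, (u x - u x₀) ^ 2 ≤ C * energy w u := fun x =>
    (hconn.preconnected x₀ x).elim fun W => pair_bound hsymm hw W
  choose C hC hCu using h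
  refine ⟨∑ x, C x + 1, add_pos_of_nonneg_of_pos (Finset.sum_nonneg fun x _ => hC x) one_pos,
    fun u => ?_⟩
  have h1 : ∑ x, (u x - u x₀) ^ 2 ≤ (∑ x, C x) * energy w u := by
    rw [Finset.sum_mul]
    exact Finset.sum_le_sum fun x _ => hCu x u
  linarith [energy_nonneg hw u]

/-- Coercivity: among functions with `u ≤ log (1/2)`, a bound on `J` from above bounds `u` from below. -/
lemma sublevel_bounded [Nonempty V] {w : V → V → ℝ} {μ : V → ℝ}
    (hsymm : ∀ x y, w x y = w y x) (hw : ∀ x y, 0 ≤ w x y) (hμ : ∀ x, 0 < μ x)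
    (hconn : (SimpleGraph.fromRel (fun x y => 0 < w x y)).Connected)
    (p : ℕ) {f : V → ℝ} (hf : gint μ f < 0) {lam : ℝ} (hlam : lam < 0) (R : ℝ) :
    ∃ m : ℝ, ∀ u : V → ℝ, (∀ x, u x ≤ Real.log (1 / 2)) → Jfun w μ p lam f u ≤ R →
      ∀ x, m ≤ u x := by
  obtain ⟨x₀⟩ := ‹Nonempty V›
  obtain ⟨C, hC, hP⟩ := poincare hsymm hw hconn x₀
  set a : ℝ := -gint μ f with ha
  have hapos : 0 < a := by linarith
  set T : ℝ := -lam / (2 * p + 2) * ∑ x, μ x with hT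
  set Q : ℝ := 2 * C * ∑ x, (μ x * f x) ^ 2 with hQ
  set B : ℝ := R + T + Q with hB
  refine ⟨-(B / a) - (1 + 8 * C * B), fun u hu hJ x => ?_⟩
  have hL : Real.log (1 / 2) ≤ 0 := Real.log_nonpos (by norm_num) (by norm_num)
  rw [Jfun_eq w hμ] at hJ
  have hnl : -T ≤ (lam / (2 * p + 2)) * ∑ x, μ x * (Real.exp (u x) - 1) ^ (2 * p + 2) := by
    have h1 : ∑ x, μ x * (Real.exp (u x) - 1) ^ (2 * p + 2) ≤ ∑ x, μ x := by
      refine Finset.sum_le_sum fun x _ => mul_le_of_le_one_right (hμ x).le ?_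
      have e1 := Real.exp_pos (u x)
      have e2 : Real.exp (u x) ≤ 1 := Real.exp_le_one_iff.2 ((hu x).trans hL)
      rw [show 2 * p + 2 = 2 * (p + 1) by ring, pow_mul]
      exact pow_le_one₀ (sq_nonneg _) (by nlinarith)
    have h2 : lam / (2 * p + 2) ≤ 0 := div_nonpos_of_nonpos_of_nonneg hlam.le (by positivity)
    have := mul_le_mul_of_nonpos_left h1 h2
    rw [hT, neg_div]
    linarith
  have hlin : ∑ x, μ x * (f x * u x) = a * (-u x₀) + ∑ x, (μ x * f x) * (u x - u x₀) := by
    rw [ha]; unfold gint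
    rw [neg_mul_neg, Finset.sum_mul, ← Finset.sum_add_distrib]
    exact Finset.sum_congr rfl fun x _ => by ring
  -- Young's inequality, weighted so that only half of the energy term is used up.
  have hyoung : -(Q + (1 / 8) * energy w u) ≤ ∑ x, (μ x * f x) * (u x - u x₀) := by
    have h1 : ∑ x, -(2 * C * (μ x * f x) ^ 2 + 1 / (8 * C) * (u x - u x₀) ^ 2)
        ≤ ∑ x, (μ x * f x) * (u x - u x₀) := by
      refine Finset.sum_le_sum fun x _ => ?_
      have : 0 ≤ 1 / (8 * C) * (4 * C * (μ x * f x) + (u x - u x₀)) ^ 2 := by positivity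
      have e : 1 / (8 * C) * (4 * C * (μ x * f x) + (u x - u x₀)) ^ 2
          = 2 * C * (μ x * f x) ^ 2 + (μ x * f x) * (u x - u x₀)
            + 1 / (8 * C) * (u x - u x₀) ^ 2 := by
        field_simp; ring
      linarith
    rw [Finset.sum_neg_distrib, Finset.sum_add_distrib, ← Finset.mul_sum, ← Finset.mul_sum] at h1
    have h2 : 1 / (8 * C) * ∑ x, (u x - u x₀) ^ 2 ≤ (1 / 8) * energy w u := by
      calc _ ≤ 1 / (8 * C) * (C * energy w u) := by gcongr; exact hP u
        _ = _ := by field_simp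
    linarith
  have hmain : (1 / 8) * energy w u + a * (-u x₀) ≤ B := by rw [hB]; linarith
  have hE := energy_nonneg hw u
  have hx0 : 0 ≤ a * (-u x₀) := mul_nonneg hapos.le (by linarith [hu x₀])
  have h0 : -u x₀ ≤ B / a := by rw [le_div_iff₀ hapos]; linarith
  have hd : (u x - u x₀) ^ 2 ≤ 8 * C * B := by
    have h1 := Finset.single_le_sum (f := fun x => (u x - u x₀) ^ 2)
      (fun x _ => sq_nonneg _) (Finset.mem_univ x)
    have h2 : C * energy w u ≤ C * (8 * B) := by gcongr; linarith
    linarith [hP u]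
  nlinarith [sq_nonneg (u x - u x₀ + 1), sq_nonneg (u x - u x₀)]

lemma exists_min [Nonempty V] {w : V → V → ℝ} {μ : V → ℝ}
    (hsymm : ∀ x y, w x y = w y x) (hw : ∀ x y, 0 ≤ w x y) (hμ : ∀ x, 0 < μ x)
    (hconn : (SimpleGraph.fromRel (fun x y => 0 < w x y)).Connected)
    (p : ℕ) {f : V → ℝ} (hf : gint μ f < 0) {lam : ℝ} (hlam : lam < 0) :
    ∃ u : V → ℝ, (∀ x, u x ≤ Real.log (1 / 2)) ∧
      ∀ v : V → ℝ, (∀ x, v x ≤ Real.log (1 / 2)) → Jfun w μ p lam f u ≤ Jfun w μ p lam f v := by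
  set u₀ : V → ℝ := fun _ => Real.log (1 / 2)
  obtain ⟨m, hm⟩ := sublevel_bounded hsymm hw hμ hconn p hf hlam (Jfun w μ p lam f u₀)
  have hcont := continuous_Jfun w hμ p lam f
  set S : Set (V → ℝ) := Set.Icc (fun _ => m) u₀ ∩ {u | Jfun w μ p lam f u ≤ Jfun w μ p lam f u₀}
  have hS : IsCompact S := isCompact_Icc.inter_right (isClosed_le hcont continuous_const)
  have hu₀ : u₀ ∈ S := ⟨⟨hm u₀ (fun _ => le_rfl) le_rfl, le_rfl⟩, le_refl (Jfun w μ p lam f u₀)⟩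
  obtain ⟨u, huS, hmin⟩ := hS.exists_isMinOn ⟨u₀, hu₀⟩ hcont.continuousOn
  refine ⟨u, huS.1.2, fun v hv => ?_⟩
  by_cases h : Jfun w μ p lam f v ≤ Jfun w μ p lam f u₀
  · exact hmin ⟨⟨hm v hv h, hv⟩, h⟩
  · exact (huS.2 : Jfun w μ p lam f u ≤ _).trans (not_le.1 h).le

end Helpers

theorem stmt_15 {V : Type*} [Fintype V] [Nonempty V]
    (w : V → V → ℝ) (μ : V → ℝ)
    (hsymm : ∀ x y, w x y = w y x) (hnonneg : ∀ x y, 0 ≤ w x y)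
    (hμ : ∀ x, 0 < μ x)
    (hconn : (SimpleGraph.fromRel (fun x y => 0 < w x y)).Connected)
    (p : ℕ) (f : V → ℝ) (hf : gint μ f < 0) :
    ∃ Λ₀ : ℝ, Λ₀ < 0 ∧ ∀ lam : ℝ, lam < Λ₀ →
      ∃ ulam : V → ℝ,
        IsLocalMin (Jfun w μ p lam f) ulam
        ∧ (∀ x, glap w μ ulam x
            = lam * Real.exp (ulam x) * (Real.exp (ulam x) - 1) ^ (2 * p + 1) + f x)
        ∧ (∀ x, ulam x < Real.log (1 / 2)) := by
  classical
  have hsum : 0 ≤ ∑ x, |f x| := Finset.sum_nonneg fun x _ => abs_nonneg _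
  have h2p : (0 : ℝ) < 2 ^ (2 * p + 2) := by positivity
  refine ⟨-(2 ^ (2 * p + 2) * (∑ x, |f x| + 1)), neg_neg_of_pos (by positivity),
    fun lam hlam => ?_⟩
  have hlam0 : lam < 0 := hlam.trans (neg_neg_of_pos (by positivity))
  obtain ⟨u, huK, hmin⟩ := exists_min hsymm hnonneg hμ hconn p hf hlam0
  have hlt : ∀ x, u x < Real.log (1 / 2) := by
    intro x
    by_contra hx
    have hux : u x = Real.log (1 / 2) := le_antisymm (huK x) (not_lt.1 hx)
    have hlap : glap w μ u x ≤ 0 := by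
      unfold glap
      refine mul_nonpos_of_nonneg_of_nonpos (one_div_nonneg.2 (hμ x).le)
        (Finset.sum_nonpos fun y _ => mul_nonpos_of_nonneg_of_nonpos (hnonneg x y) ?_)
      linarith [huK y]
    have hnl : lam * Real.exp (u x) * (Real.exp (u x) - 1) ^ (2 * p + 1)
        = -lam / 2 ^ (2 * p + 2) := by
      rw [hux, Real.exp_log (by norm_num), show (1 / 2 - 1 : ℝ) = -(1 / 2) by norm_num,
        Odd.neg_pow ⟨p, rfl⟩, one_div_pow, pow_succ (2 : ℝ) (2 * p + 1)]
      field_simp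
    have hfx : -(∑ x, |f x|) ≤ f x := by
      have := Finset.single_le_sum (f := fun x => |f x|) (fun x _ => abs_nonneg _)
        (Finset.mem_univ x)
      linarith [neg_abs_le (f x)]
    have hbig : ∑ x, |f x| + 1 < -lam / 2 ^ (2 * p + 2) := by
      rw [lt_div_iff₀ h2p]; linarith
    have hd := hasDerivAt_Jfun_single hsymm hμ p lam f u x
    have hdpos : 0 < μ x * (-glap w μ u x
        + lam * Real.exp (u x) * (Real.exp (u x) - 1) ^ (2 * p + 1) + f x) := by
      refine mul_pos (hμ x) ?_
      rw [hnl]; linarith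
    have hev := ((hasDerivAt_iff_tendsto_slope.1 hd).mono_left
      (nhdsWithin_mono (0 : ℝ) (show Set.Iio (0 : ℝ) ⊆ {0}ᶜ from fun t ht => ne_of_lt ht))).eventually
      (lt_mem_nhds hdpos)
    obtain ⟨t, ht, ht0⟩ := (hev.and self_mem_nhdsWithin).exists
    have ht0' : t < 0 := ht0
    have hle := hmin (fun y => u y + t * (Pi.single x 1 : V → ℝ) y) fun y => by
      have : t * (Pi.single x 1 : V → ℝ) y ≤ 0 :=
        mul_nonpos_of_nonpos_of_nonneg ht0'.le (by rw [Pi.single_apply]; split_ifs <;> norm_num)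
      linarith [huK y]
    rw [slope_def_field] at ht
    simp only [zero_mul, add_zero, sub_zero] at ht
    exact absurd ht (not_lt.2 (div_nonpos_of_nonneg_of_nonpos (sub_nonneg.2 hle) ht0'.le))
  have hloc : IsLocalMin (Jfun w μ p lam f) u := by
    have : ∀ᶠ v : V → ℝ in 𝓝 u, ∀ x, v x < Real.log (1 / 2) :=
      eventually_all.2 fun x => (continuous_apply x).continuousAt.eventually_lt_const (hlt x)
    filter_upwards [this] with v hv using hmin v fun x => (hv x).le
  refine ⟨u, hloc, fun x => ?_, hlt⟩
  have hd := hasDerivAt_Jfun_single hsymm hμ p lam f u x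
  have hc : ContinuousAt (fun (t : ℝ) (y : V) => u y + t * (Pi.single x 1 : V → ℝ) y) 0 := by
    fun_prop
  have hloc' : IsLocalMin
      (fun t : ℝ => Jfun w μ p lam f (fun y => u y + t * (Pi.single x 1 : V → ℝ) y)) 0 := by
    have h0 : (fun y => u y + (0 : ℝ) * (Pi.single x 1 : V → ℝ) y) = u := by ext; simp
    have hc' : Tendsto (fun (t : ℝ) (y : V) => u y + t * (Pi.single x 1 : V → ℝ) y)
        (𝓝 0) (𝓝 u) := by simpa [ContinuousAt, h0] using hc
    filter_upwards [hc'.eventually hloc] with t ht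
    simpa [h0] using ht
  have hz := (mul_eq_zero.1 (hloc'.hasDerivAt_eq_zero hd)).resolve_left (hμ x).ne'
  linarith
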